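/- Let 1 ≤ m ≤ n−1, let B ⊂ ℝⁿ be Borel measurable, and let W₀ : ℝⁿ → G(n,m) be Borel measurable. Then the function ℝⁿ → [0,∞], x ↦ ℋ^m(B ∩ (x + W₀(x))), is Borel measurable. -/

import Mathlib

open MeasureTheory Metric Filter
open scoped ENNReal NNReal RealInnerProductSpace Topology

noncomputable section

abbrev En (n : ℕ) : Type := EuclideanSpace ℝ (Fin n)

def projCLM {n : ℕ} (W : Submodule ℝ (En n)) : En n →L[ℝ] En n :=
  W.subtypeL.comp (Submodule.orthogonalProjection W)

def spanW {n m : ℕ} (w : Fin m → En n → En n) (x : En n) : Submodule ℝ (En n) :=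
  Submodule.span ℝ (Set.range fun i => w i x)

def affW {n m : ℕ} (w : Fin m → En n → En n) (x : En n) : Set (En n) :=
  {y | y - x ∈ spanW w x}

def gMap {n k : ℕ} (v : Fin k → En n → En n) (u : En n) (x : En n) : En k :=
  (WithLp.equiv 2 (Fin k → ℝ)).symm fun i => ⟪v i x, x - u⟫

def unitBallVol (m : ℕ) : ℝ≥0∞ := volume (ball (0 : En m) 1)

def phiEW (n m : ℕ) (E : Set (En n)) (w : Fin m → En n → En n) (B : Set (En n)) : ℝ≥0∞ :=
  ∫⁻ x in E, μH[(m : ℝ)] (B ∩ affW w x) ∂volume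

def Y0W (n m : ℕ) (E : Set (En n)) (v : Fin (n - m) → En n → En n) (u : En n) : ℝ≥0∞ :=
  μH[(m : ℝ)] (E ∩ {x | gMap v u x = 0})

def YmW (n m : ℕ) (F : Set (En n)) (v : Fin (n - m) → En n → En n) (u : En n) : ℝ≥0∞ :=
  liminf (fun j : ℕ =>
    (∫⁻ y in closedBall (0 : En (n - m)) (1 / (j + 1)),
        μH[(m : ℝ)] (F ∩ {x | gMap v u x = y}) ∂volume)
      / volume (closedBall (0 : En (n - m)) (1 / (j + 1)))) atTop

def polyball {n m : ℕ} (w : Fin m → En n → En n) (x₀ : En n) (r : ℝ) : Set (En n) :=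
  {x | ‖projCLM (spanW w x₀) (x - x₀)‖ ≤ r ∧ ‖projCLM (spanW w x₀)ᗮ (x - x₀)‖ ≤ r}

theorem measurable_gramSchmidt_aux {n m : ℕ} (f : En n → Fin m → En n)
    (hf : ∀ i, Measurable fun x => f x i) (i : Fin m) :
    Measurable fun x => InnerProductSpace.gramSchmidt ℝ (f x) i := by
  induction i using WellFoundedLT.induction with
  | ind i ih =>
    have : (fun x => InnerProductSpace.gramSchmidt ℝ (f x) i) = fun x => f x i -
        ∑ j ∈ Finset.Iio i, (inner ℝ (InnerProductSpace.gramSchmidt ℝ (f x) j) (f x i) /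
          (‖InnerProductSpace.gramSchmidt ℝ (f x) j‖ ^ 2)) •
            InnerProductSpace.gramSchmidt ℝ (f x) j := by
      funext x
      rw [InnerProductSpace.gramSchmidt_def]
      simp only [Submodule.starProjection_singleton]
      rfl
    rw [this]
    refine (hf i).sub (Finset.measurable_sum _ fun j hj => ?_)
    have h := ih j (Finset.mem_Iio.1 hj)
    exact ((h.inner (hf i)).div (h.norm.pow_const 2)).smul h

theorem measurable_gramSchmidtNormed_aux {n m : ℕ} (f : En n → Fin m → En n)
    (hf : ∀ i, Measurable fun x => f x i) (i : Fin m) :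
    Measurable fun x => InnerProductSpace.gramSchmidtNormed ℝ (f x) i := by
  have h := measurable_gramSchmidt_aux f hf i
  exact h.norm.inv.smul h

theorem isometry_aux {n m : ℕ} (e : Fin m → En n) (he : Orthonormal ℝ e) (x : En n) :
    Isometry fun t : En m => x + ∑ i, t i • e i := by
  refine Isometry.of_dist_eq fun s t => ?_
  rw [dist_add_left, dist_eq_norm, dist_eq_norm, ← Finset.sum_sub_distrib]
  simp only [← sub_smul]
  have h := he.inner_sum (fun i => s i - t i) (fun i => s i - t i) Finset.univ
  rw [real_inner_self_eq_norm_sq] at h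
  have h2 := EuclideanSpace.real_norm_sq_eq (s - t)
  rw [← sq_eq_sq₀ (norm_nonneg _) (norm_nonneg _), h, h2]
  refine Finset.sum_congr rfl fun i _ => ?_
  simp [sq]

theorem range_aux {n m : ℕ} (e : Fin m → En n) (x : En n) :
    Set.range (fun t : En m => x + ∑ i, t i • e i) =
      {y | y - x ∈ Submodule.span ℝ (Set.range e)} := by
  ext y
  simp only [Set.mem_range, Set.mem_ofPred_eq, Submodule.mem_span_range_iff_exists_fun]
  constructor
  · rintro ⟨t, rfl⟩
    exact ⟨fun i => t i, by simp⟩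
  · rintro ⟨c, hc⟩
    exact ⟨WithLp.toLp 2 c, by simp [hc]⟩

/-- The frame obtained from the projections of chosen coordinate vectors. -/
def frameS {n m : ℕ} (W : En n → Submodule ℝ (En n)) (S : Fin m → Fin n) (x : En n) :
    Fin m → En n :=
  InnerProductSpace.gramSchmidtNormed ℝ
    fun i => projCLM (W x) (EuclideanSpace.basisFun (Fin n) ℝ (S i))

theorem span_proj_aux {n : ℕ} (W : Submodule ℝ (En n)) :
    Submodule.span ℝ (Set.range fun i => projCLM W (EuclideanSpace.basisFun (Fin n) ℝ i)) = W := by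
  have h1 : (Set.range fun i => projCLM W (EuclideanSpace.basisFun (Fin n) ℝ i)) =
      (projCLM W).toLinearMap '' Set.range (EuclideanSpace.basisFun (Fin n) ℝ).toBasis := by
    rw [← Set.range_comp]; ext; simp
  rw [h1, Submodule.span_image, Module.Basis.span_eq, Submodule.map_top]
  exact Submodule.range_starProjection W

theorem frame_mem {n m : ℕ} (W : En n → Submodule ℝ (En n)) (S : Fin m → Fin n) (x : En n) :
    Submodule.span ℝ (Set.range (frameS W S x)) ≤ W x := by
  unfold frameS
  rw [InnerProductSpace.span_gramSchmidtNormed_range, InnerProductSpace.span_gramSchmidt]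
  rw [Submodule.span_le]
  rintro _ ⟨i, rfl⟩
  exact Submodule.coe_mem _

theorem frame_span {n m : ℕ} (W : En n → Submodule ℝ (En n)) (S : Fin m → Fin n) (x : En n)
    (hr : Module.finrank ℝ (W x) = m) (ho : Orthonormal ℝ (frameS W S x)) :
    Submodule.span ℝ (Set.range (frameS W S x)) = W x := by
  refine Submodule.eq_of_le_of_finrank_eq (frame_mem W S x) ?_
  rw [finrank_span_eq_card ho.linearIndependent, hr, Fintype.card_fin]

theorem frame_exists {n m : ℕ} (W : En n → Submodule ℝ (En n)) (x : En n)
    (hr : Module.finrank ℝ (W x) = m) :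
    ∃ S : Fin m → Fin n, Orthonormal ℝ (frameS W S x) := by
  obtain ⟨κ, a, ha, hs, hl⟩ := exists_linearIndependent' ℝ
    (fun i => projCLM (W x) (EuclideanSpace.basisFun (Fin n) ℝ i))
  have : Finite κ := Finite.of_injective a ha
  have := Fintype.ofFinite κ
  have hc : Fintype.card κ = m := by
    rw [← finrank_span_eq_card hl, hs, span_proj_aux, hr]
  let φ : Fin m ≃ κ := (Fintype.equivFinOfCardEq hc).symm
  exact ⟨a ∘ φ, InnerProductSpace.gramSchmidtNormed_orthonormal (hl.comp φ φ.injective)⟩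

/-- For Borel `B ⊆ ℝⁿ` and a Borel measurable field of `m`-planes `W₀`,
the function `x ↦ ℋ^m(B ∩ (x + W₀(x)))` is Borel measurable. -/
theorem measurable_hausdorff_plane_field
    (n m : ℕ) (hm : 1 ≤ m) (hmn : m + 1 ≤ n)
    (B : Set (En n)) (hB : MeasurableSet B)
    (W₀ : En n → Submodule ℝ (En n))
    (hrank : ∀ x, Module.finrank ℝ (W₀ x) = m)
    (hmeas : Measurable fun x => projCLM (W₀ x)) :
    Measurable fun x : En n => μH[(m : ℝ)] (B ∩ {y | y - x ∈ W₀ x}) := by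
  have hfr : ∀ (S : Fin m → Fin n) i, Measurable fun x => frameS W₀ S x i := fun S i =>
    measurable_gramSchmidtNormed_aux _ (fun i => hmeas.apply_continuousLinearMap _) i
  let g : (Fin m → Fin n) → En n → ℝ≥0∞ := fun S x =>
    μH[(m : ℝ)] ((fun t : En m => x + ∑ i, t i • frameS W₀ S x i) ⁻¹' B)
  have hsf : SFinite (μH[(m : ℝ)] : Measure (En m)) := by
    have : (μH[(m : ℝ)] : Measure (En m)).IsAddHaarMeasure := by
      simpa using MeasureTheory.isAddHaarMeasure_hausdorffMeasure (E := En m)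
    infer_instance
  have hg : ∀ S, Measurable (g S) := by
    intro S
    have hF : Measurable fun p : En n × En m => p.1 + ∑ i, p.2 i • frameS W₀ S p.1 i := by
      refine measurable_fst.add (Finset.measurable_sum _ fun i _ => ?_)
      have h1 : Measurable fun p : En n × En m => p.2 i := by fun_prop
      exact h1.smul ((hfr S i).comp measurable_fst)
    exact measurable_measure_prodMk_left (hF hB)
  have hfg : ∀ S x, Orthonormal ℝ (frameS W₀ S x) →
      μH[(m : ℝ)] (B ∩ {y | y - x ∈ W₀ x}) = g S x := by
    intro S x ho
    have hi := isometry_aux _ ho x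
    have := hi.hausdorffMeasure_preimage (d := (m : ℝ)) (Or.inl (by positivity)) B
    rw [range_aux, frame_span W₀ S x (hrank x) ho] at this
    exact this.symm
  have hA : ∀ S : Fin m → Fin n, MeasurableSet {x | Orthonormal ℝ (frameS W₀ S x)} := by
    intro S
    simp only [orthonormal_iff_ite, Set.ofPred_forall]
    exact MeasurableSet.iInter fun i => MeasurableSet.iInter fun j =>
      measurableSet_eq_fun ((hfr S i).inner (hfr S j)) measurable_const
  intro s hs
  have : (fun x : En n => μH[(m : ℝ)] (B ∩ {y | y - x ∈ W₀ x})) ⁻¹' s =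
      ⋃ S : Fin m → Fin n, {x | Orthonormal ℝ (frameS W₀ S x)} ∩ g S ⁻¹' s := by
    ext x
    simp only [Set.mem_preimage, Set.mem_iUnion, Set.mem_inter_iff, Set.mem_ofPred_eq]
    constructor
    · intro h
      obtain ⟨S, ho⟩ := frame_exists W₀ x (hrank x)
      exact ⟨S, ho, hfg S x ho ▸ h⟩
    · rintro ⟨S, ho, h⟩
      rw [hfg S x ho]; exact h
  rw [this]
  exact MeasurableSet.iUnion fun S => (hA S).inter (hg S hs)
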